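/- The commutant of the tensor square of the fundamental 5-dimensional representation of the classical Poincaré group is 3-dimensional: the set of matrices W ∈ M₂₅(ℂ) satisfying W·(ρ(g,a) ⊗ ρ(g,a)) = (ρ(g,a) ⊗ ρ(g,a))·W for all g ∈ SL(2,ℂ) and all a ∈ ℝ⁴ is exactly the linear span of the three linearly independent matrices 1₂₅, τ₅, and m_P. -/

import Mathlib

open Matrix Complex

noncomputable section

/-- The Pauli matrices σ₀, σ₁, σ₂, σ₃. -/
def pauli : Fin 4 → Matrix (Fin 2) (Fin 2) ℂ :=
  ![!![1, 0; 0, 1], !![0, 1; 1, 0], !![0, -I; I, 0], !![1, 0; 0, -1]]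

/-- `Λ` is the matrix λ_g associated with `g`:
`Σ_i (Λ x)_i σ_i = g (Σ_j x_j σ_j) g*` for all `x ∈ ℝ⁴`. -/
def IsLorentzPair (g : Matrix (Fin 2) (Fin 2) ℂ) (Λ : Matrix (Fin 4) (Fin 4) ℝ) : Prop :=
  ∀ x : Fin 4 → ℝ,
    ∑ i, ((Λ.mulVec x i : ℝ) : ℂ) • pauli i
      = g * (∑ j, ((x j : ℝ) : ℂ) • pauli j) * gᴴ

/-- Kronecker product of `Fin`-indexed matrices, with the standard (lexicographic)
Kronecker ordering of indices. -/
def kron {m n p q : ℕ} (A : Matrix (Fin m) (Fin n) ℂ) (B : Matrix (Fin p) (Fin q) ℂ) :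
    Matrix (Fin (m * p)) (Fin (n * q)) ℂ :=
  Matrix.of fun i j => A i.divNat j.divNat * B i.modNat j.modNat

/-- The flip matrix τ₅ on ℂ⁵⊗ℂ⁵ ≅ ℂ²⁵ determined by τ₅(u⊗v) = v⊗u. -/
def tau5 : Matrix (Fin (5 * 5)) (Fin (5 * 5)) ℂ :=
  Matrix.of fun i j => if i.divNat = j.modNat ∧ i.modNat = j.divNat then 1 else 0

/-- The Minkowski metric η padded to a 5×5 matrix (zeros in the last row and column). -/
def eta5 : Matrix (Fin 5) (Fin 5) ℂ :=
  Matrix.of fun i j =>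
    if i = j then (if i = (4 : Fin 5) then 0 else if i = 0 then 1 else -1) else 0

/-- The vector `m̂ = Σ_{i,j=1}^{4} η_{ij} e_i ⊗ e_j ∈ ℂ⁵⊗ℂ⁵`. -/
def mhat : Fin (5 * 5) → ℂ := fun p => eta5 p.divNat p.modNat

/-- The rank-one matrix `m_P = m̂·(e₅⊗e₅)ᵀ`. -/
def mP : Matrix (Fin (5 * 5)) (Fin (5 * 5)) ℂ :=
  Matrix.of fun p q =>
    mhat p * (if q.divNat = (4 : Fin 5) ∧ q.modNat = (4 : Fin 5) then 1 else 0)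

/-- The fundamental 5-dimensional representation `ρ(g,a) = [[λ_g, a],[0,1]]` of the
classical Poincaré group. -/
def rho5 (Λ : Matrix (Fin 4) (Fin 4) ℝ) (a : Fin 4 → ℝ) : Matrix (Fin 5) (Fin 5) ℂ :=
  Matrix.reindex finSumFinEquiv finSumFinEquiv
    (Matrix.fromBlocks (Λ.map (fun r => (r : ℂ)))
      (Matrix.of fun i (_ : Fin 1) => ((a i : ℝ) : ℂ))
      (0 : Matrix (Fin 1) (Fin 4) ℂ) (1 : Matrix (Fin 1) (Fin 1) ℂ))

/-!
Write `V = ℂ⁴` and `e` for the homogenizing basis vector. A matrix commuting with all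
`ρ(g, a) ⊗ ρ(g, a)` commutes with the infinitesimal translations `D_c`, which send `e ⊗ e` to
`e_c ⊗ e + e ⊗ e_c` and `e_k ⊗ e` to `e_k ⊗ e_c`. These relations determine it from its
`SL(2, ℂ)`-equivariant blocks `V → V ⊗ V` (two of them), `V ⊗ e → V ⊗ e`, `V ⊗ e → e ⊗ V` and
`e ⊗ e → V ⊗ V`. The first two vanish, the next two are scalars by Schur's lemma, and the last is a
multiple of the inverse metric; `1`, `τ₅` and `m_P` realize the three remaining parameters.

In spinor coordinates `λ_g` is `ḡ ⊗ g`. One torus element suffices to exclude maps `V → V ⊗ V`: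
for `g = diag(1 + i, (1 - i) / 2)` the eigenvalues of `ḡ ⊗ g` are the distinct numbers `2`, `-i`,
`i`, `1/2`, and no product of two of them is one of them. Together with a unipotent element it also
gives Schur's lemma.
-/

open Sum (inl inr)
open scoped Kronecker

section AffineTensorSquare

variable {ι R : Type*} [CommRing R]

/-- The matrix `[[A, v], [0, 1]]` of the affine transformation `x ↦ A x + v` in homogeneous
coordinates; the coordinate `inr ()` is the homogenizing one. -/
def affineMatrix (A : Matrix ι ι R) (v : ι → R) : Matrix (ι ⊕ Unit) (ι ⊕ Unit) R :=
  fromBlocks A (replicateCol Unit v) 0 1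

variable [DecidableEq ι]

/-- The flip `u ⊗ v ↦ v ⊗ u`. -/
def tensorSwap (κ R : Type*) [DecidableEq κ] [Zero R] [One R] : Matrix (κ × κ) (κ × κ) R :=
  (Equiv.prodComm κ κ).toPEquiv.toMatrix

/-- The rank-one matrix sending `e ⊗ e`, for `e` the homogenizing basis vector, to the tensor with
coefficients `B`. Since `vec` stacks columns, its entry at row `(inl i, inl j)` is `B j i`. -/
def formMatrix (B : Matrix ι ι R) :
    Matrix ((ι ⊕ Unit) × (ι ⊕ Unit)) ((ι ⊕ Unit) × (ι ⊕ Unit)) R :=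
  vecMulVec (vec (fromBlocks B 0 0 0)) (Pi.single (inr (), inr ()) 1)

/-- The action on the tensor square of the infinitesimal translation along the `c`-th axis. -/
def translationGenerator (R : Type*) [CommRing R] (c : ι) :
    Matrix ((ι ⊕ Unit) × (ι ⊕ Unit)) ((ι ⊕ Unit) × (ι ⊕ Unit)) R :=
  single (inl c) (inr ()) 1 ⊗ₖ 1 + 1 ⊗ₖ single (inl c) (inr ()) 1

theorem tensorSwap_apply {κ : Type*} [DecidableEq κ] (p q : κ × κ) :
    tensorSwap κ R p q = if p.swap = q then 1 else 0 := by
  simp [tensorSwap, PEquiv.toMatrix_apply, Equiv.toPEquiv_apply, eq_comm]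

theorem formMatrix_apply (B : Matrix ι ι R) (p q : (ι ⊕ Unit) × (ι ⊕ Unit)) :
    formMatrix B p q
      = fromBlocks B 0 0 0 p.2 p.1 * if q = (inr (), inr ()) then 1 else 0 := by
  rw [formMatrix, vecMulVec_apply, Pi.single_apply, vec]

theorem affineMatrix_one_single (c : ι) (t : R) :
    affineMatrix 1 (Pi.single c t) = transvection (inl c) (inr ()) t := by
  ext (i | i) (j | j) <;>
    simp [affineMatrix, transvection, single_apply, Pi.single_apply, one_apply, eq_comm]

theorem linearIndependent_one_tensorSwap_formMatrix [NoZeroDivisors R] {B : Matrix ι ι R}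
    (hB : B ≠ 0) : LinearIndependent R ![1, tensorSwap (ι ⊕ Unit) R, formMatrix B] := by
  obtain ⟨i, j, hij⟩ : ∃ i j, B i j ≠ 0 := by
    by_contra! h
    exact hB (ext h)
  rw [Fintype.linearIndependent_iff]
  intro c hc
  have entry (p q : (ι ⊕ Unit) × (ι ⊕ Unit)) := congrFun (congrFun hc p) q
  simp only [Fin.sum_univ_three, cons_val_zero, cons_val_one, cons_val, Matrix.add_apply,
    Matrix.smul_apply, smul_eq_mul, Matrix.zero_apply, tensorSwap_apply, formMatrix_apply] at entry
  have h₀ : c 0 = 0 := by simpa using entry (inl i, inr ()) (inl i, inr ())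
  have h₁ : c 1 = 0 := by simpa using entry (inl i, inr ()) (inr (), inl i)
  have h₂ : c 2 = 0 := by simpa [hij] using entry (inl j, inl i) (inr (), inr ())
  intro k
  fin_cases k <;> assumption

variable [Fintype ι]

section Swap

variable {κ : Type*} [Fintype κ] [DecidableEq κ]

theorem tensorSwap_mul_apply (M : Matrix (κ × κ) (κ × κ) R) (p q : κ × κ) :
    (tensorSwap κ R * M) p q = M p.swap q := by
  rw [tensorSwap, PEquiv.toMatrix_toPEquiv_mul]
  rfl

theorem mul_tensorSwap_apply (M : Matrix (κ × κ) (κ × κ) R) (p q : κ × κ) :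
    (M * tensorSwap κ R) p q = M p q.swap := by
  rw [tensorSwap, PEquiv.mul_toMatrix_toPEquiv]
  rfl

theorem tensorSwap_commute_kronecker_self (A : Matrix κ κ R) :
    Commute (tensorSwap κ R) (A ⊗ₖ A) := by
  ext p q
  simp [tensorSwap_mul_apply, mul_tensorSwap_apply, mul_comm]

end Swap

theorem formMatrix_commute_affineMatrix_kronecker_self {A B : Matrix ι ι R} (h : A * B * Aᵀ = B)
    (v : ι → R) : Commute (formMatrix B) (affineMatrix A v ⊗ₖ affineMatrix A v) := by
  have hcol :
      (affineMatrix A v ⊗ₖ affineMatrix A v) *ᵥ vec (fromBlocks B 0 0 0)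
        = vec (fromBlocks B 0 0 0) := by
    rw [kronecker_mulVec_vec]
    simp [affineMatrix, fromBlocks_multiply, fromBlocks_transpose, h]
  have hrow : Pi.single (inr (), inr ()) 1 ᵥ* (affineMatrix A v ⊗ₖ affineMatrix A v)
      = Pi.single (inr (), inr ()) 1 := by
    ext ⟨i | i, j | j⟩ <;> simp [affineMatrix]
  rw [commute_iff_eq, formMatrix, vecMulVec_mul, mul_vecMulVec, hcol, hrow]

theorem commute_affineMatrix_kronecker_self_of_eq {A B : Matrix ι ι R} (h : A * B * Aᵀ = B)
    (v : ι → R) (x y z : R) :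
    Commute (x • 1 + y • tensorSwap (ι ⊕ Unit) R + z • formMatrix B)
      (affineMatrix A v ⊗ₖ affineMatrix A v) :=
  (((Commute.one_left _).smul_left x).add_left
    ((tensorSwap_commute_kronecker_self _).smul_left y)).add_left
      ((formMatrix_commute_affineMatrix_kronecker_self h v).smul_left z)

theorem translationGenerator_mulVec_apply (c : ι) (w : (ι ⊕ Unit) × (ι ⊕ Unit) → R)
    (i j : ι ⊕ Unit) :
    (translationGenerator R c *ᵥ w) (i, j)
      = (if i = inl c then w (inr (), j) else 0) + if j = inl c then w (i, inr ()) else 0 := by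
  simp [translationGenerator, mulVec, dotProduct, Fintype.sum_prod_type, single_apply, one_apply,
    add_mul, Finset.sum_add_distrib, ite_and, eq_comm]

theorem vecMul_translationGenerator_apply (c : ι) (w : (ι ⊕ Unit) × (ι ⊕ Unit) → R)
    (k l : ι ⊕ Unit) :
    (w ᵥ* translationGenerator R c) (k, l)
      = (if k = inr () then w (inl c, l) else 0) + if l = inr () then w (k, inl c) else 0 := by
  simp [translationGenerator, vecMul, dotProduct, Fintype.sum_prod_type, single_apply, one_apply,
    mul_add, Finset.sum_add_distrib, ite_and, eq_comm]

theorem eq_zero_of_forall_translationGenerator_mulVec_eq_zero [Nontrivial ι]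
    {w : (ι ⊕ Unit) × (ι ⊕ Unit) → R} (hw : ∀ c, translationGenerator R c *ᵥ w = 0)
    (hV : ∀ i j, w (inl i, inl j) = 0) : w = 0 := by
  have entry (c : ι) (i j : ι ⊕ Unit) := congrFun (hw c) (i, j)
  simp only [translationGenerator_mulVec_apply, Pi.zero_apply] at entry
  ext ⟨i | i, j | j⟩
  · exact hV i j
  · obtain ⟨c, hc⟩ := exists_ne i
    simpa [hc.symm] using entry c (inl i) (inl c)
  · obtain ⟨c, hc⟩ := exists_ne j
    simpa [hc.symm] using entry c (inl c) (inl j)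
  · obtain ⟨c⟩ : Nonempty ι := inferInstance
    simpa using entry c (inl c) (inr ())

variable {W : Matrix ((ι ⊕ Unit) × (ι ⊕ Unit)) ((ι ⊕ Unit) × (ι ⊕ Unit)) R}

theorem commute_translationGenerator_of_commute_affineMatrix (h2 : IsUnit (2 : R)) {c : ι}
    (hpos : Commute W (affineMatrix 1 (Pi.single c 1) ⊗ₖ affineMatrix 1 (Pi.single c 1)))
    (hneg : Commute W (affineMatrix 1 (-Pi.single c 1) ⊗ₖ affineMatrix 1 (-Pi.single c 1))) :
    Commute W (translationGenerator R c) := by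
  obtain ⟨two, htwo⟩ := h2
  have hdiff : affineMatrix 1 (Pi.single c 1) ⊗ₖ affineMatrix 1 (Pi.single c 1)
      - affineMatrix 1 (-Pi.single c 1) ⊗ₖ affineMatrix 1 (-Pi.single c 1)
      = two • translationGenerator R c := by
    rw [Units.smul_def, htwo, ← Pi.single_neg, affineMatrix_one_single, affineMatrix_one_single,
      transvection, transvection, translationGenerator, ← neg_one_smul R 1, ← smul_single]
    simp only [add_kronecker, kronecker_add, smul_kronecker, kronecker_smul]
    module
  have := hpos.sub_right hneg
  rwa [hdiff, Commute.smul_right_iff] at this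

theorem eq_zero_of_forall_commute_translationGenerator [Nontrivial ι]
    (hW : ∀ c, Commute W (translationGenerator R c))
    (hV : ∀ i j q, q.1 = inr () ∨ q.2 = inr () → W (inl i, inl j) q = 0)
    (hl : ∀ i k, W (inl i, inr ()) (inl k, inr ()) = 0)
    (hr : ∀ i k, W (inr (), inl i) (inl k, inr ()) = 0) :
    W = 0 := by
  have entry (c : ι) (p : (ι ⊕ Unit) × (ι ⊕ Unit)) (k l : ι ⊕ Unit) :
      (translationGenerator R c *ᵥ W.col (k, l)) p
        = (if k = inr () then W p (inl c, l) else 0)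
          + if l = inr () then W p (k, inl c) else 0 :=
    (congrFun (congrFun (hW c).eq p) (k, l)).symm.trans
      (vecMul_translationGenerator_apply c (W.row p) k l)
  have hVV (i j k l : ι) : W (inl i, inl j) (inl k, inl l) = 0 := by
    simpa [translationGenerator_mulVec_apply, hl, hr] using
      (entry l (inl i, inl j) (inl k) (inr ())).symm
  have hcol (k l : ι ⊕ Unit) (hkl : ∀ c p, (translationGenerator R c *ᵥ W.col (k, l)) p = 0) :
      ∀ p, W p (k, l) = 0 := by
    refine congrFun (eq_zero_of_forall_translationGenerator_mulVec_eq_zero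
      (w := W.col (k, l)) (fun c ↦ funext (hkl c)) fun i j ↦ ?_)
    rcases k with k | k <;> rcases l with l | l <;> simp [hV, hVV]
  have hll (k l : ι) := hcol (inl k) (inl l) fun c p ↦ by simp [entry]
  have hlr (k : ι) := hcol (inl k) (inr ()) fun c p ↦ by simp [entry, hll]
  have hrl (l : ι) := hcol (inr ()) (inl l) fun c p ↦ by simp [entry, hll]
  have hrr := hcol (inr ()) (inr ()) fun c p ↦ by simp [entry, hlr, hrl]
  ext p ⟨k | ⟨⟩, l | ⟨⟩⟩
  exacts [hll k l p, hlr k p, hrl l p, hrr p]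

theorem eq_of_forall_commute_translationGenerator [Nontrivial ι] (h2 : IsUnit (2 : R))
    {B : Matrix ι ι R} {x y z : R} (hW : ∀ c, Commute W (translationGenerator R c))
    (hx : W.submatrix (inl ·, inr ()) (inl ·, inr ()) = x • 1)
    (hy : (tensorSwap _ R * W).submatrix (inl ·, inr ()) (inl ·, inr ()) = y • 1)
    (hz : (of fun i j ↦ W (inl j, inl i) (inr (), inr ())) = z • B)
    (hl : W.submatrix (Prod.map inl inl) (inl ·, inr ()) = 0)
    (hr : (W * tensorSwap _ R).submatrix (Prod.map inl inl) (inl ·, inr ()) = 0) :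
    W = x • 1 + y • tensorSwap (ι ⊕ Unit) R + z • formMatrix B := by
  have hspan (v : ι → R) := commute_affineMatrix_kronecker_self_of_eq
    (show 1 * B * 1ᵀ = B by simp) v x y z
  have hx' (i k : ι) : W (inl i, inr ()) (inl k, inr ()) = if i = k then x else 0 := by
    simpa [one_apply] using congrFun (congrFun hx i) k
  have hy' (i k : ι) : W (inr (), inl i) (inl k, inr ()) = if i = k then y else 0 := by
    simpa [one_apply, tensorSwap_mul_apply] using congrFun (congrFun hy i) k
  have hz' (i j : ι) : W (inl i, inl j) (inr (), inr ()) = z * B j i := by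
    simpa using congrFun (congrFun hz j) i
  have hl' (i j k : ι) : W (inl i, inl j) (inl k, inr ()) = 0 := by
    simpa using congrFun (congrFun hl (i, j)) k
  have hr' (i j k : ι) : W (inl i, inl j) (inr (), inl k) = 0 := by
    simpa [mul_tensorSwap_apply] using congrFun (congrFun hr (i, j)) k
  refine sub_eq_zero.1 (eq_zero_of_forall_commute_translationGenerator
    (fun c ↦ (hW c).sub_left (commute_translationGenerator_of_commute_affineMatrix h2
      (hspan _) (hspan _))) ?_ ?_ ?_)
  · rintro i j ⟨k | k, l | l⟩ hq
    · simp at hq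
    all_goals simp [tensorSwap_apply, formMatrix_apply, one_apply, hz', hl', hr']
  all_goals simp [tensorSwap_apply, formMatrix_apply, one_apply, hx', hy']

section LinearPart

variable {A : Matrix ι ι R}

omit [DecidableEq ι] in
theorem kronecker_mul_submatrix_of_commute
    (hW : Commute W (affineMatrix A 0 ⊗ₖ affineMatrix A 0)) :
    (A ⊗ₖ A) * W.submatrix (Prod.map inl inl) (inl ·, inr ())
      = W.submatrix (Prod.map inl inl) (inl ·, inr ()) * A := by
  ext ⟨i, j⟩ k
  simpa [affineMatrix, mul_apply, Fintype.sum_prod_type] using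
    (congrFun (congrFun hW.eq (inl i, inl j)) (inl k, inr ())).symm

omit [DecidableEq ι] in
theorem commute_submatrix_of_commute (hW : Commute W (affineMatrix A 0 ⊗ₖ affineMatrix A 0)) :
    Commute (W.submatrix (inl ·, inr ()) (inl ·, inr ())) A := by
  ext i k
  simpa [affineMatrix, mul_apply, Fintype.sum_prod_type] using
    congrFun (congrFun hW.eq (inl i, inr ())) (inl k, inr ())

omit [DecidableEq ι] in
theorem mul_mul_transpose_of_commute (hW : Commute W (affineMatrix A 0 ⊗ₖ affineMatrix A 0)) :
    A * (of fun i j ↦ W (inl j, inl i) (inr (), inr ())) * Aᵀ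
      = of fun i j ↦ W (inl j, inl i) (inr (), inr ()) := by
  rw [← vec_inj, ← kronecker_mulVec_vec]
  ext ⟨i, j⟩
  simpa [affineMatrix, mul_apply, mulVec, dotProduct, Fintype.sum_prod_type, vec] using
    (congrFun (congrFun hW.eq (inl i, inl j)) (inr (), inr ())).symm

end LinearPart

section Commutant

variable {G : Set (Matrix ι ι R)} {B : Matrix ι ι R}

theorem exists_eq_smul_of_forall_mul_mul_transpose (hB : IsUnit B)
    (hinv : ∀ A ∈ G, A * B * Aᵀ = B)
    (hschur : ∀ N, (∀ A ∈ G, Commute N A) → ∃ c : R, N = c • 1)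
    {M : Matrix ι ι R} (hM : ∀ A ∈ G, A * M * Aᵀ = M) : ∃ c : R, M = c • B := by
  have hdet := (isUnit_iff_isUnit_det B).1 hB
  have hdual (A) (hA : A ∈ G) : Aᵀ * B⁻¹ * A = B⁻¹ := by
    have hright : A * (B * Aᵀ * B⁻¹) = 1 := by
      rw [← Matrix.mul_assoc, ← Matrix.mul_assoc, hinv A hA, mul_nonsing_inv _ hdet]
    calc Aᵀ * B⁻¹ * A = B⁻¹ * ((B * Aᵀ * B⁻¹) * A) := by
          simp only [Matrix.mul_assoc, nonsing_inv_mul_cancel_left _ _ hdet]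
      _ = B⁻¹ := by rw [mul_eq_one_comm.1 hright, Matrix.mul_one]
  obtain ⟨c, hc⟩ := hschur (M * B⁻¹) fun A hA ↦
    calc M * B⁻¹ * A = A * M * (Aᵀ * B⁻¹ * A) := by
          conv_lhs => rw [← hM A hA]
          simp only [Matrix.mul_assoc]
      _ = A * (M * B⁻¹) := by rw [hdual A hA, Matrix.mul_assoc]
  refine ⟨c, ?_⟩
  rw [← nonsing_inv_mul_cancel_right B M hdet, hc, Matrix.smul_mul, Matrix.one_mul]

theorem forall_commute_affineMatrix_kronecker_self_iff [Nontrivial ι] (h2 : IsUnit (2 : R))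
    {L : AddSubgroup (ι → R)} (hL : ∀ i, Pi.single i 1 ∈ L) (hG : 1 ∈ G) (hB : IsUnit B)
    (hinv : ∀ A ∈ G, A * B * Aᵀ = B)
    (hschur : ∀ N, (∀ A ∈ G, Commute N A) → ∃ c : R, N = c • 1)
    (hhom : ∀ T : Matrix (ι × ι) ι R, (∀ A ∈ G, (A ⊗ₖ A) * T = T * A) → T = 0) :
    (∀ A ∈ G, ∀ v ∈ L, Commute W (affineMatrix A v ⊗ₖ affineMatrix A v)) ↔
      ∃ x y z : R, W = x • 1 + y • tensorSwap (ι ⊕ Unit) R + z • formMatrix B := by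
  refine ⟨fun hW ↦ ?_, fun ⟨x, y, z, hxyz⟩ A hA v _ ↦
    hxyz ▸ commute_affineMatrix_kronecker_self_of_eq (hinv A hA) v x y z⟩
  have hlin (A) (hA : A ∈ G) := hW A hA 0 L.zero_mem
  have hswap (A : Matrix ι ι R) := tensorSwap_commute_kronecker_self (affineMatrix A 0)
  obtain ⟨x, hx⟩ := hschur _ fun A hA ↦ commute_submatrix_of_commute (hlin A hA)
  obtain ⟨y, hy⟩ := hschur _ fun A hA ↦
    commute_submatrix_of_commute ((hswap A).mul_left (hlin A hA))
  obtain ⟨z, hz⟩ := exists_eq_smul_of_forall_mul_mul_transpose hB hinv hschur fun A hA ↦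
    mul_mul_transpose_of_commute (hlin A hA)
  have hl := hhom _ fun A hA ↦ kronecker_mul_submatrix_of_commute (hlin A hA)
  have hr := hhom _ fun A hA ↦
    kronecker_mul_submatrix_of_commute ((hlin A hA).mul_left (hswap A))
  refine ⟨x, y, z, eq_of_forall_commute_translationGenerator h2 (fun c ↦ ?_) hx hy hz hl hr⟩
  exact commute_translationGenerator_of_commute_affineMatrix h2 (hW 1 hG _ (hL c))
    (hW 1 hG _ (L.neg_mem (hL c)))

end Commutant

end AffineTensorSquare

section Intertwining

variable {m n R : Type*} [Fintype n] [DecidableEq n] [CommRing R]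

theorem exists_eq_smul_one_of_commute_diagonal [NoZeroDivisors R] {N U : Matrix n n R} {d : n → R}
    (hd : Function.Injective d) (hN : Commute N (diagonal d)) {r : n} (hr : ∀ j, U r j ≠ 0)
    (hU : Commute N U) : ∃ c : R, N = c • 1 := by
  have hoff : N = diagonal fun i ↦ N i i := by
    ext i j
    rcases eq_or_ne i j with rfl | hij
    · rw [diagonal_apply_eq]
    have hent := congrFun (congrFun hN.eq i) j
    rw [mul_diagonal, diagonal_mul, mul_comm, mul_eq_mul_right_iff] at hent
    rw [diagonal_apply_ne _ hij]
    exact hent.resolve_left fun h ↦ hij (hd h).symm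
  refine ⟨N r r, ?_⟩
  rw [smul_one_eq_diagonal, hoff]
  congr 1
  ext j
  have hent := congrFun (congrFun hU.eq r) j
  rw [hoff, diagonal_mul, mul_diagonal, mul_comm, mul_eq_mul_left_iff] at hent
  simpa using (hent.resolve_right (hr j)).symm

theorem eq_zero_of_kronecker_diagonal_mul_eq [NoZeroDivisors R] {d : n → R}
    (hd : ∀ i j k, d i * d j ≠ d k) {T : Matrix (n × n) n R}
    (hT : (diagonal d ⊗ₖ diagonal d) * T = T * diagonal d) : T = 0 := by
  ext ⟨i, j⟩ k
  have hent := congrFun (congrFun hT (i, j)) k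
  rw [diagonal_kronecker_diagonal, mul_diagonal, diagonal_mul, mul_comm, mul_eq_mul_left_iff]
    at hent
  exact hent.resolve_left (hd i j k)

variable [Fintype m] [DecidableEq m] {S : Matrix m n R} {S' : Matrix n m R}
  {A : Matrix n n R}

theorem mul_eq_mul_of_intertwine {K : Matrix m m R} (hSS' : S * S' = 1) (hS'S : S' * S = 1)
    (hA : S * A = K * S) : A * S' = S' * K :=
  calc A * S' = S' * (S * A) * S' := by rw [← Matrix.mul_assoc, hS'S, Matrix.one_mul]
    _ = S' * K := by rw [hA, Matrix.mul_assoc, Matrix.mul_assoc, hSS', Matrix.mul_one]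

theorem commute_conj_of_intertwine {N : Matrix n n R} {K : Matrix m m R} (hSS' : S * S' = 1)
    (hS'S : S' * S = 1) (hA : S * A = K * S) (hN : Commute N A) : Commute (S * N * S') K :=
  calc S * N * S' * K = S * (N * A) * S' := by
        simp only [Matrix.mul_assoc, mul_eq_mul_of_intertwine hSS' hS'S hA]
    _ = K * (S * N * S') := by
        rw [hN.eq, ← Matrix.mul_assoc, hA]
        simp only [Matrix.mul_assoc]

theorem exists_eq_smul_one_of_intertwine_diagonal [NoZeroDivisors R] {N A' : Matrix n n R}
    {U : Matrix m m R} {d : m → R} (hSS' : S * S' = 1) (hS'S : S' * S = 1)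
    (hd : Function.Injective d) {r : m} (hr : ∀ j, U r j ≠ 0) (hA : S * A = diagonal d * S)
    (hA' : S * A' = U * S) (hN : Commute N A) (hN' : Commute N A') : ∃ c : R, N = c • 1 := by
  obtain ⟨c, hc⟩ := exists_eq_smul_one_of_commute_diagonal hd
    (commute_conj_of_intertwine hSS' hS'S hA hN) hr
    (commute_conj_of_intertwine hSS' hS'S hA' hN')
  refine ⟨c, ?_⟩
  calc N = S' * S * N * (S' * S) := by rw [hS'S, Matrix.one_mul, Matrix.mul_one]
    _ = S' * (S * N * S') * S := by simp only [Matrix.mul_assoc]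
    _ = c • 1 := by rw [hc, Matrix.mul_smul, Matrix.smul_mul, Matrix.mul_one, hS'S]

theorem eq_zero_of_kronecker_mul_eq_of_intertwine_diagonal [NoZeroDivisors R]
    {T : Matrix (n × n) n R} {d : m → R} (hSS' : S * S' = 1) (hS'S : S' * S = 1)
    (hd : ∀ i j k, d i * d j ≠ d k) (hA : S * A = diagonal d * S)
    (hT : (A ⊗ₖ A) * T = T * A) : T = 0 := by
  have hconj : (S ⊗ₖ S) * T * S' = 0 := by
    refine eq_zero_of_kronecker_diagonal_mul_eq hd ?_
    calc (diagonal d ⊗ₖ diagonal d) * ((S ⊗ₖ S) * T * S')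
        = (S ⊗ₖ S) * ((A ⊗ₖ A) * T) * S' := by
          simp only [← Matrix.mul_assoc, ← mul_kronecker_mul, hA]
      _ = (S ⊗ₖ S) * T * S' * diagonal d := by
          rw [hT]
          simp only [Matrix.mul_assoc, mul_eq_mul_of_intertwine hSS' hS'S hA]
  classical
  calc T = ((S' * S) ⊗ₖ (S' * S)) * T * (S' * S) := by
        rw [hS'S, one_kronecker_one, Matrix.one_mul, Matrix.mul_one]
    _ = (S' ⊗ₖ S') * ((S ⊗ₖ S) * T * S') * S := by
        simp only [mul_kronecker_mul, Matrix.mul_assoc]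
    _ = 0 := by rw [hconj, Matrix.mul_zero, Matrix.zero_mul]

omit [DecidableEq m] in
theorem mul_mul_transpose_eq_of_intertwine {B : Matrix n n R} {K : Matrix m m R}
    (hS'S : S' * S = 1) (hA : S * A = K * S) (hK : K * (S * B * Sᵀ) * Kᵀ = S * B * Sᵀ) :
    A * B * Aᵀ = B := by
  have cancel (M : Matrix n n R) : S' * (S * M * Sᵀ) * S'ᵀ = M := by
    calc S' * (S * M * Sᵀ) * S'ᵀ = (S' * S) * M * (S' * S)ᵀ := by
          simp only [transpose_mul, Matrix.mul_assoc]
      _ = M := by rw [hS'S, transpose_one, Matrix.one_mul, Matrix.mul_one]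
  have hconj : S * (A * B * Aᵀ) * Sᵀ = S * B * Sᵀ := by
    calc S * (A * B * Aᵀ) * Sᵀ = (S * A) * B * (S * A)ᵀ := by
          simp only [transpose_mul, Matrix.mul_assoc]
      _ = K * (S * B * Sᵀ) * Kᵀ := by
          rw [hA]
          simp only [transpose_mul, Matrix.mul_assoc]
      _ = S * B * Sᵀ := hK
  rw [← cancel (A * B * Aᵀ), hconj, cancel]

end Intertwining

section Lorentz

/-- The matrix whose columns are the vectorized Pauli matrices. It carries the coordinates of a
four-vector to its spinor components, on which `λ_g` acts as `ḡ ⊗ g`. -/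
def pauliMatrix : Matrix (Fin 2 × Fin 2) (Fin 4) ℂ :=
  of fun p i ↦ vec (pauli i) p

theorem smul_conjTranspose_mul_pauliMatrix : ((2⁻¹ : ℂ) • pauliMatrixᴴ) * pauliMatrix = 1 := by
  ext i j
  fin_cases i <;> fin_cases j <;>
    norm_num [pauliMatrix, pauli, mul_apply, Fintype.sum_prod_type, one_apply, mul_assoc]

theorem pauliMatrix_mul_smul_conjTranspose : pauliMatrix * ((2⁻¹ : ℂ) • pauliMatrixᴴ) = 1 :=
  (mul_eq_one_comm_of_card_eq _ _ _ (by simp)).1 smul_conjTranspose_mul_pauliMatrix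

theorem isHermitian_pauli (i : Fin 4) : (pauli i).IsHermitian := by
  ext j k
  fin_cases i <;> fin_cases j <;> fin_cases k <;> simp [pauli]

theorem exists_sum_smul_pauli_eq {H : Matrix (Fin 2) (Fin 2) ℂ} (hH : H.IsHermitian) :
    ∃ c : Fin 4 → ℝ, ∑ i, (c i : ℂ) • pauli i = H := by
  have h₀ := Complex.conj_eq_iff_im.1 (hH.apply 0 0)
  have h₁ := Complex.conj_eq_iff_im.1 (hH.apply 1 1)
  have h₂ := hH.apply 1 0
  refine ⟨![((H 0 0).re + (H 1 1).re) / 2, (H 0 1).re, -(H 0 1).im,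
    ((H 0 0).re - (H 1 1).re) / 2], ?_⟩
  ext i j
  fin_cases i <;> fin_cases j <;>
    simp [Fin.sum_univ_four, pauli, ← h₂, h₀, h₁, Complex.ext_iff] <;> ring

variable {g : Matrix (Fin 2) (Fin 2) ℂ} {Λ : Matrix (Fin 4) (Fin 4) ℝ}

theorem isLorentzPair_iff_forall_pauli :
    IsLorentzPair g Λ ↔ ∀ j, ∑ i, (Λ i j : ℂ) • pauli i = g * pauli j * gᴴ := by
  refine ⟨fun h j ↦ ?_, fun h x ↦ ?_⟩
  · simpa [Pi.single_apply, apply_ite Complex.ofReal, ite_smul] using h (Pi.single j 1)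
  · simp only [Matrix.mul_sum, Matrix.sum_mul, Matrix.mul_smul, Matrix.smul_mul, ← h,
      Finset.smul_sum, mulVec, dotProduct, ofReal_sum, ofReal_mul, Finset.sum_smul, smul_smul]
    rw [Finset.sum_comm]
    simp only [mul_comm]

theorem exists_isLorentzPair (g : Matrix (Fin 2) (Fin 2) ℂ) : ∃ Λ, IsLorentzPair g Λ := by
  choose c hc using fun j ↦
    exists_sum_smul_pauli_eq (isHermitian_mul_mul_conjTranspose g (isHermitian_pauli j))
  exact ⟨of fun i j ↦ c j i, isLorentzPair_iff_forall_pauli.2 hc⟩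

theorem IsLorentzPair.pauliMatrix_mul (h : IsLorentzPair g Λ) :
    pauliMatrix * Λ.map ofReal = (gᴴᵀ ⊗ₖ g) * pauliMatrix := by
  ext p j
  calc (pauliMatrix * Λ.map ofReal) p j = vec (∑ i, (Λ i j : ℂ) • pauli i) p := by
        simp [pauliMatrix, mul_apply, vec, Matrix.sum_apply, mul_comm]
    _ = ((gᴴᵀ ⊗ₖ g) *ᵥ vec (pauli j)) p := by
        rw [isLorentzPair_iff_forall_pauli.1 h, kronecker_mulVec_vec, transpose_transpose]
    _ = ((gᴴᵀ ⊗ₖ g) * pauliMatrix) p j := rfl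

/-- The Minkowski metric. -/
def minkowskiForm : Matrix (Fin 4) (Fin 4) ℂ := diagonal ![1, -1, -1, -1]

theorem isUnit_minkowskiForm : IsUnit minkowskiForm := by
  simp [isUnit_iff_isUnit_det, minkowskiForm, Fin.prod_univ_four]

theorem pauliMatrix_mul_minkowskiForm_mul_transpose :
    pauliMatrix * minkowskiForm * pauliMatrixᵀ
      = (2 : ℂ) • (!![0, 1; -1, 0] ⊗ₖ !![0, 1; -1, 0]) := by
  ext ⟨i, j⟩ ⟨k, l⟩
  fin_cases i <;> fin_cases j <;> fin_cases k <;> fin_cases l <;>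
    simp [pauliMatrix, minkowskiForm, pauli, mul_apply, Fin.sum_univ_four] <;> norm_num

theorem mul_symplectic_mul_transpose {R : Type*} [CommRing R] (g : Matrix (Fin 2) (Fin 2) R) :
    g * !![0, 1; -1, 0] * gᵀ = g.det • !![0, 1; -1, 0] := by
  ext i j
  fin_cases i <;> fin_cases j <;> simp [mul_apply, Fin.sum_univ_two, det_fin_two] <;> ring

/-- The complexified matrices `λ_g`, for `g ∈ SL(2,ℂ)`. -/
def lorentzMatrices : Set (Matrix (Fin 4) (Fin 4) ℂ) :=
  {A | ∃ g Λ, g.det = 1 ∧ IsLorentzPair g Λ ∧ Λ.map ofReal = A}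

theorem exists_mem_lorentzMatrices (hg : g.det = 1) :
    ∃ A ∈ lorentzMatrices, pauliMatrix * A = (gᴴᵀ ⊗ₖ g) * pauliMatrix := by
  obtain ⟨Λ, hΛ⟩ := exists_isLorentzPair g
  exact ⟨_, ⟨g, Λ, hg, hΛ, rfl⟩, hΛ.pauliMatrix_mul⟩

theorem one_mem_lorentzMatrices : 1 ∈ lorentzMatrices :=
  ⟨1, 1, det_one, fun x ↦ by simp, by simp⟩

theorem mul_minkowskiForm_mul_transpose {A : Matrix (Fin 4) (Fin 4) ℂ}
    (hA : A ∈ lorentzMatrices) : A * minkowskiForm * Aᵀ = minkowskiForm := by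
  obtain ⟨g, Λ, hg, hΛ, rfl⟩ := hA
  refine mul_mul_transpose_eq_of_intertwine smul_conjTranspose_mul_pauliMatrix
    hΛ.pauliMatrix_mul ?_
  rw [pauliMatrix_mul_minkowskiForm_mul_transpose, ← kroneckerMap_transpose, Matrix.mul_smul,
    Matrix.smul_mul, ← mul_kronecker_mul, ← mul_kronecker_mul, mul_symplectic_mul_transpose,
    mul_symplectic_mul_transpose, det_transpose, det_conjTranspose, hg, star_one, one_smul]

/-- The eigenvalues of `ḡ ⊗ g` for `g = diag(1 + i, (1 - i) / 2)`: a product of two of them is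
never one of them. -/
def spinorWeight (p : Fin 2 × Fin 2) : ℂ := !![2, -I; I, 1 / 2] p.1 p.2

theorem spinorWeight_injective : Function.Injective spinorWeight := by
  rintro ⟨i, j⟩ ⟨k, l⟩
  fin_cases i <;> fin_cases j <;> fin_cases k <;> fin_cases l <;>
    simp [spinorWeight, Complex.ext_iff] <;> norm_num

theorem spinorWeight_mul_spinorWeight_ne (p q r : Fin 2 × Fin 2) :
    spinorWeight p * spinorWeight q ≠ spinorWeight r := by
  obtain ⟨i, j⟩ := p
  obtain ⟨k, l⟩ := q
  obtain ⟨a, b⟩ := r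
  fin_cases i <;> fin_cases j <;> fin_cases k <;> fin_cases l <;> fin_cases a <;> fin_cases b <;>
    norm_num [spinorWeight, Complex.ext_iff]

theorem exists_mem_lorentzMatrices_diagonal_spinorWeight :
    ∃ A ∈ lorentzMatrices, pauliMatrix * A = diagonal spinorWeight * pauliMatrix := by
  have hdiag : (diagonal ![1 + I, (1 - I) / 2])ᴴᵀ ⊗ₖ diagonal ![1 + I, (1 - I) / 2]
      = diagonal spinorWeight := by
    rw [diagonal_conjTranspose, diagonal_transpose, diagonal_kronecker_diagonal]
    congr 1
    ext ⟨i, j⟩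
    fin_cases i <;> fin_cases j <;> norm_num [spinorWeight, Complex.ext_iff]
  rw [← hdiag]
  exact exists_mem_lorentzMatrices (by norm_num [Complex.ext_iff])

theorem exists_eq_smul_one_of_commute_lorentzMatrices {N : Matrix (Fin 4) (Fin 4) ℂ}
    (hN : ∀ A ∈ lorentzMatrices, Commute N A) : ∃ c : ℂ, N = c • 1 := by
  obtain ⟨A, hA, hSA⟩ := exists_mem_lorentzMatrices_diagonal_spinorWeight
  obtain ⟨A', hA', hSA'⟩ := exists_mem_lorentzMatrices (g := !![1, 1; 0, 1]) (by simp)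
  refine exists_eq_smul_one_of_intertwine_diagonal pauliMatrix_mul_smul_conjTranspose
    smul_conjTranspose_mul_pauliMatrix spinorWeight_injective (r := (0, 0)) ?_ hSA hSA' (hN A hA)
    (hN A' hA')
  rintro ⟨i, j⟩
  fin_cases i <;> fin_cases j <;> simp

theorem eq_zero_of_forall_lorentzMatrices_kronecker_mul_eq
    {T : Matrix (Fin 4 × Fin 4) (Fin 4) ℂ}
    (hT : ∀ A ∈ lorentzMatrices, (A ⊗ₖ A) * T = T * A) : T = 0 := by
  obtain ⟨A, hA, hSA⟩ := exists_mem_lorentzMatrices_diagonal_spinorWeight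
  exact eq_zero_of_kronecker_mul_eq_of_intertwine_diagonal pauliMatrix_mul_smul_conjTranspose
    smul_conjTranspose_mul_pauliMatrix spinorWeight_mul_spinorWeight_ne hSA (hT A hA)

end Lorentz

section Transport

/-- The group of real translation vectors inside `ℂ⁴`. -/
def realTranslations : AddSubgroup (Fin 4 → ℂ) :=
  (ofRealHom.toAddMonoidHom.compLeft (Fin 4)).range

/-- The order-preserving indexing of homogeneous coordinates by `Fin 5`, the homogenizing one
last. -/
def homogeneousEquiv : Fin 4 ⊕ Unit ≃ Fin 5 :=
  ((Equiv.refl _).sumCongr finOneEquiv.symm).trans finSumFinEquiv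

/-- The Kronecker ordering of the basis of the tensor square. -/
def tensorIndexEquiv : (Fin 4 ⊕ Unit) × (Fin 4 ⊕ Unit) ≃ Fin (5 * 5) :=
  (homogeneousEquiv.prodCongr homogeneousEquiv).trans finProdFinEquiv

theorem rho5_eq_reindex (Λ : Matrix (Fin 4) (Fin 4) ℝ) (a : Fin 4 → ℝ) :
    rho5 Λ a = reindex homogeneousEquiv homogeneousEquiv
      (affineMatrix (Λ.map ofReal) (ofReal ∘ a)) := by
  rw [← Equiv.symm_apply_eq]
  ext (i | i) (j | j) <;> simp [rho5, homogeneousEquiv, affineMatrix, one_apply]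

theorem kron_rho5_eq_reindexAlgEquiv (Λ : Matrix (Fin 4) (Fin 4) ℝ) (a : Fin 4 → ℝ) :
    kron (rho5 Λ a) (rho5 Λ a) = reindexAlgEquiv ℂ ℂ tensorIndexEquiv
      (affineMatrix (Λ.map ofReal) (ofReal ∘ a) ⊗ₖ affineMatrix (Λ.map ofReal) (ofReal ∘ a)) := by
  rw [rho5_eq_reindex]
  rfl

theorem divNat_tensorIndexEquiv (p : (Fin 4 ⊕ Unit) × (Fin 4 ⊕ Unit)) :
    (tensorIndexEquiv p).divNat = homogeneousEquiv p.1 :=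
  congrArg Prod.fst (finProdFinEquiv.symm_apply_apply _)

theorem modNat_tensorIndexEquiv (p : (Fin 4 ⊕ Unit) × (Fin 4 ⊕ Unit)) :
    (tensorIndexEquiv p).modNat = homogeneousEquiv p.2 :=
  congrArg Prod.snd (finProdFinEquiv.symm_apply_apply _)

theorem homogeneousEquiv_eq_four_iff {i : Fin 4 ⊕ Unit} :
    homogeneousEquiv i = 4 ↔ i = inr () :=
  homogeneousEquiv.apply_eq_iff_eq (y := inr ())

theorem eta5_homogeneousEquiv (i j : Fin 4 ⊕ Unit) :
    eta5 (homogeneousEquiv i) (homogeneousEquiv j) = fromBlocks minkowskiForm 0 0 0 j i := by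
  rcases i with i | i <;> rcases j with j | j
  · fin_cases i <;> fin_cases j <;> rfl
  all_goals simp [eta5, homogeneousEquiv_eq_four_iff]

theorem tau5_eq_reindexAlgEquiv :
    tau5 = reindexAlgEquiv ℂ ℂ tensorIndexEquiv (tensorSwap (Fin 4 ⊕ Unit) ℂ) := by
  rw [← AlgEquiv.symm_apply_eq]
  ext p q
  simp [-Nat.reduceMul, tau5, tensorSwap_apply, divNat_tensorIndexEquiv, modNat_tensorIndexEquiv,
    Prod.ext_iff, and_comm]

theorem mP_eq_reindexAlgEquiv :
    mP = reindexAlgEquiv ℂ ℂ tensorIndexEquiv (formMatrix minkowskiForm) := by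
  rw [← AlgEquiv.symm_apply_eq]
  ext p q
  simp [-Nat.reduceMul, mP, mhat, formMatrix_apply, divNat_tensorIndexEquiv,
    modNat_tensorIndexEquiv, eta5_homogeneousEquiv, homogeneousEquiv_eq_four_iff, Prod.ext_iff]

theorem forall_commute_lorentz_translations_iff
    (W : Matrix ((Fin 4 ⊕ Unit) × (Fin 4 ⊕ Unit)) ((Fin 4 ⊕ Unit) × (Fin 4 ⊕ Unit)) ℂ) :
    (∀ A ∈ lorentzMatrices, ∀ v ∈ realTranslations,
        Commute W (affineMatrix A v ⊗ₖ affineMatrix A v)) ↔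
      ∃ x y z : ℂ, W = x • 1 + y • tensorSwap (Fin 4 ⊕ Unit) ℂ + z • formMatrix minkowskiForm :=
  forall_commute_affineMatrix_kronecker_self_iff (by simp)
    (fun i ↦ ⟨Pi.single i 1, by ext j; simp [Pi.single_apply, apply_ite]⟩) one_mem_lorentzMatrices
    isUnit_minkowskiForm
    (fun _ ↦ mul_minkowskiForm_mul_transpose)
    (fun _ ↦ exists_eq_smul_one_of_commute_lorentzMatrices)
    (fun _ ↦ eq_zero_of_forall_lorentzMatrices_kronecker_mul_eq)

theorem forall_mul_kron_rho5_eq_iff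
    (W : Matrix ((Fin 4 ⊕ Unit) × (Fin 4 ⊕ Unit)) ((Fin 4 ⊕ Unit) × (Fin 4 ⊕ Unit)) ℂ) :
    (∀ g : Matrix (Fin 2) (Fin 2) ℂ, g.det = 1 → ∀ Λ, IsLorentzPair g Λ → ∀ a,
        reindexAlgEquiv ℂ ℂ tensorIndexEquiv W * kron (rho5 Λ a) (rho5 Λ a)
          = kron (rho5 Λ a) (rho5 Λ a) * reindexAlgEquiv ℂ ℂ tensorIndexEquiv W) ↔
      ∀ A ∈ lorentzMatrices, ∀ v ∈ realTranslations,
        Commute W (affineMatrix A v ⊗ₖ affineMatrix A v) := by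
  simp only [kron_rho5_eq_reindexAlgEquiv, ← map_mul, EmbeddingLike.apply_eq_iff_eq]
  constructor
  · rintro h _ ⟨g, Λ, hg, hΛ, rfl⟩ _ ⟨a, rfl⟩
    exact h g hg Λ hΛ a
  · exact fun h g hg Λ hΛ a ↦ h _ ⟨g, Λ, hg, hΛ, rfl⟩ _ ⟨a, rfl⟩

end Transport

/-- The commutant of the tensor square of the fundamental 5-dimensional representation
of the classical Poincaré group is exactly the span of `1₂₅`, `τ₅` and `m_P`, and these
three matrices are linearly independent. -/
theorem poincare_commutant :
    (∀ W : Matrix (Fin (5 * 5)) (Fin (5 * 5)) ℂ,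
      (∀ g : Matrix (Fin 2) (Fin 2) ℂ, g.det = 1 →
        ∀ Λ : Matrix (Fin 4) (Fin 4) ℝ, IsLorentzPair g Λ →
        ∀ a : Fin 4 → ℝ,
          W * kron (rho5 Λ a) (rho5 Λ a) = kron (rho5 Λ a) (rho5 Λ a) * W) ↔
      (∃ x y z : ℂ,
        W = x • (1 : Matrix (Fin (5 * 5)) (Fin (5 * 5)) ℂ) + y • tau5 + z • mP)) ∧
    LinearIndependent ℂ ![(1 : Matrix (Fin (5 * 5)) (Fin (5 * 5)) ℂ), tau5, mP] := by
  let Φ := reindexAlgEquiv ℂ ℂ tensorIndexEquiv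
  rw [tau5_eq_reindexAlgEquiv, mP_eq_reindexAlgEquiv, ← map_one Φ]
  constructor
  · intro W
    obtain ⟨W, rfl⟩ := Φ.surjective W
    rw [forall_mul_kron_rho5_eq_iff, forall_commute_lorentz_translations_iff]
    simp only [← map_smul, ← map_add, Φ, EmbeddingLike.apply_eq_iff_eq]
  · have h := (linearIndependent_one_tensorSwap_formMatrix isUnit_minkowskiForm.ne_zero).map'
      Φ.toLinearMap Φ.toLinearEquiv.ker
    rwa [← FinVec.map_eq] at h
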